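/- Let r ≥ 1 and let U, V ∈ M_r(ℂ). Then ∫_{S^{2r−1}} (ξ*Uξ)·(ξ*Vξ) dμ(ξ) = (tr(U)·tr(V) + tr(UV)) / (r(r+1)). -/

import Mathlib

/-!
Expanding both quadratic forms reduces the claim to the fourth moments
`∫ conj(ξ^p) ξ^q conj(ξ^s) ξ^t dμ = (δ_pq δ_st + δ_pt δ_qs) / (r(r+1))`.
These follow from the invariance of `μ` under linear isometries (`integral_sphereUniform_comp`),
which in turn holds because isometries preserve Haar measure and `toSphere` measures cones.

* Multiplying one coordinate by `I` shows that the moments with unbalanced indices vanish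
  (`moment_eq_zero`).
* The rotation with matrix `(3/5, -4/5; 4/5, 3/5)` in two coordinates `p ≠ q` shows
  `∫ |ξ^p|⁴ = ∫ |ξ^q|⁴ = 2 ∫ |ξ^p|² |ξ^q|²` (`moment_diag`); a rational rotation with nonzero
  entries avoids square roots.
* Hence all `∫ |ξ^p|⁴` have a common value `a`, and integrating `‖ξ‖⁴ = 1` gives
  `r a + r(r-1) a/2 = 1` (`sum_moment`, `moment_ppqq`).
-/

open MeasureTheory Metric
open scoped BigOperators

noncomputable section

/-- `ξ*Uξ = ∑_{p,q} conj(ξ^p) U_{pq} ξ^q`. -/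
def quadForm {r : ℕ} (U : Matrix (Fin r) (Fin r) ℂ) (ξ : Fin r → ℂ) : ℂ :=
  ∑ p, ∑ q, (starRingEnd ℂ) (ξ p) * U p q * ξ q

instance (r : ℕ) : MeasurableSpace (EuclideanSpace ℂ (Fin r)) := borel _
instance (r : ℕ) : BorelSpace (EuclideanSpace ℂ (Fin r)) := ⟨rfl⟩

/-- The normalized rotation-invariant (uniform) probability measure on the unit sphere
`S^{2r-1} = {ξ ∈ ℂ^r : ‖ξ‖ = 1}`. -/
def sphereUniform (r : ℕ) : Measure (sphere (0 : EuclideanSpace ℂ (Fin r)) 1) :=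
  ((Measure.addHaar : Measure (EuclideanSpace ℂ (Fin r))).toSphere Set.univ)⁻¹ •
    (Measure.addHaar : Measure (EuclideanSpace ℂ (Fin r))).toSphere

/-- Linear isometries of a finite-dimensional normed space preserve additive Haar measure: the image
measure is again Haar, and it gives the unit ball the same mass. -/
lemma map_isometry_addHaar {E : Type*} [NormedAddCommGroup E] [NormedSpace ℝ E]
    [MeasurableSpace E] [BorelSpace E] [FiniteDimensional ℝ E] (μ : Measure E)
    [μ.IsAddHaarMeasure] (A : E ≃ₗᵢ[ℝ] E) : μ.map A = μ := by
  have : (μ.map A).IsAddHaarMeasure :=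
    A.toContinuousLinearEquiv.isAddHaarMeasure_map μ
  have h := Measure.isAddLeftInvariant_eq_smul (μ.map A) μ
  have hb : (μ.map A) (ball 0 1) = μ (ball 0 1) := by
    rw [Measure.map_apply A.continuous.measurable measurableSet_ball]
    simp [A.preimage_ball]
  have h0 : μ (ball (0 : E) 1) ≠ 0 := (measure_ball_pos μ 0 one_pos).ne'
  have h1 : μ (ball (0 : E) 1) ≠ ⊤ := measure_ball_lt_top.ne
  rw [h] at hb ⊢
  rw [Measure.smul_apply, ENNReal.smul_def, smul_eq_mul] at hb
  have hc := (ENNReal.mul_eq_right h0 h1).1 hb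
  rw [ENNReal.coe_eq_one] at hc
  rw [hc, one_smul]

/-- The homeomorphism of the unit sphere induced by a linear isometry. -/
def sphereMap {E : Type*} [NormedAddCommGroup E] [NormedSpace ℝ E]
    (A : E ≃ₗᵢ[ℝ] E) (x : sphere (0 : E) 1) : sphere (0 : E) 1 :=
  ⟨A x, by simp⟩

lemma continuous_sphereMap {E : Type*} [NormedAddCommGroup E] [NormedSpace ℝ E]
    (A : E ≃ₗᵢ[ℝ] E) : Continuous (sphereMap A) :=
  (A.continuous.comp continuous_subtype_val).subtype_mk _

open scoped Pointwise in
lemma map_sphereMap_toSphere {E : Type*} [NormedAddCommGroup E] [NormedSpace ℝ E]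
    [MeasurableSpace E] [BorelSpace E] [FiniteDimensional ℝ E] (μ : Measure E)
    [μ.IsAddHaarMeasure] (A : E ≃ₗᵢ[ℝ] E) :
    μ.toSphere.map (sphereMap A) = μ.toSphere := by
  ext s hs
  have hm := (continuous_sphereMap A).measurable
  rw [Measure.map_apply hm hs, Measure.toSphere_apply' μ (hm hs), Measure.toSphere_apply' μ hs]
  congr 1
  -- The cone over the preimage of `s` is the preimage of the cone over `s`.
  have hset : Set.Ioo (0 : ℝ) 1 • ((↑) '' (sphereMap A ⁻¹' s) : Set E)
      = A ⁻¹' (Set.Ioo (0 : ℝ) 1 • ((↑) '' s : Set E)) := by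
    ext x
    simp only [Set.mem_smul, Set.mem_image, Set.mem_preimage]
    constructor
    · rintro ⟨t, ht, _, ⟨y, hy, rfl⟩, rfl⟩
      exact ⟨t, ht, _, ⟨_, hy, rfl⟩, by simp [sphereMap]⟩
    · rintro ⟨t, ht, _, ⟨y, hy, rfl⟩, h⟩
      refine ⟨t, ht, _, ⟨sphereMap A.symm y, ?_, rfl⟩, ?_⟩
      · convert hy
        ext
        simp [sphereMap]
      · apply A.injective
        simp [sphereMap, h]
  rw [hset]
  refine (A.toHomeomorph.toMeasurableEquiv.map_apply (μ := μ) _).symm.trans ?_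
  exact congrArg (fun ν : Measure E => ν _) (map_isometry_addHaar μ A)

instance finiteDimensional_real_euclidean (r : ℕ) :
    FiniteDimensional ℝ (EuclideanSpace ℂ (Fin r)) :=
  FiniteDimensional.trans ℝ ℂ _

lemma isProbabilityMeasure_sphereUniform (r : ℕ) (hr : 1 ≤ r) :
    IsProbabilityMeasure (sphereUniform r) := by
  have : Nonempty (Fin r) := ⟨⟨0, hr⟩⟩
  have : NeZero ((Measure.addHaar : Measure (EuclideanSpace ℂ (Fin r))).toSphere) :=
    ⟨Measure.toSphere_ne_zero _⟩
  unfold sphereUniform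
  infer_instance

/-- Unitary invariance of the uniform measure, phrased for a norm-preserving linear map. -/
lemma integral_sphereUniform_comp {r : ℕ}
    (L : EuclideanSpace ℂ (Fin r) →ₗ[ℂ] EuclideanSpace ℂ (Fin r)) (hL : ∀ x, ‖L x‖ = ‖x‖)
    (f : EuclideanSpace ℂ (Fin r) → ℂ) (hf : Continuous f) :
    ∫ ξ, f (L (ξ : EuclideanSpace ℂ (Fin r))) ∂(sphereUniform r)
      = ∫ ξ, f (ξ : EuclideanSpace ℂ (Fin r)) ∂(sphereUniform r) := by
  let A₀ : EuclideanSpace ℂ (Fin r) →ₗᵢ[ℝ] EuclideanSpace ℂ (Fin r) :=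
    { toLinearMap := L.restrictScalars ℝ, norm_map' := hL }
  let A := A₀.toLinearIsometryEquiv rfl
  have hmap : (sphereUniform r).map (sphereMap A) = sphereUniform r := by
    unfold sphereUniform
    rw [Measure.map_smul, map_sphereMap_toSphere]
  conv_rhs => rw [← hmap]
  exact (integral_map (continuous_sphereMap A).aemeasurable
    (hf.comp continuous_subtype_val).aestronglyMeasurable).symm

/-- The monomial `conj(x^p) x^q conj(x^s) x^t`. -/
def mono {r : ℕ} (p q s t : Fin r) (x : EuclideanSpace ℂ (Fin r)) : ℂ :=
  (starRingEnd ℂ) (x p) * x q * ((starRingEnd ℂ) (x s) * x t)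

lemma continuous_mono {r : ℕ} (p q s t : Fin r) : Continuous (mono p q s t) := by
  unfold mono
  have h : ∀ i : Fin r, Continuous fun x : EuclideanSpace ℂ (Fin r) => x i := fun i =>
    (EuclideanSpace.proj (𝕜 := ℂ) i).continuous
  have hc := fun i : Fin r => Complex.continuous_conj.comp (h i)
  exact ((hc p).mul (h q)).mul ((hc s).mul (h t))

lemma integrable_of_continuous {r : ℕ} (hr : 1 ≤ r) {f : EuclideanSpace ℂ (Fin r) → ℂ}
    (hf : Continuous f) :
    Integrable (fun ξ : sphere (0 : EuclideanSpace ℂ (Fin r)) 1 => f ξ) (sphereUniform r) := by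
  have := isProbabilityMeasure_sphereUniform r hr
  exact (hf.comp continuous_subtype_val).integrable_of_hasCompactSupport
    (HasCompactSupport.of_compactSpace _)

/-- The fourth moment `∫ conj(ξ^p) ξ^q conj(ξ^s) ξ^t dμ(ξ)`. -/
def moment {r : ℕ} (p q s t : Fin r) : ℂ :=
  ∫ ξ, mono p q s t (ξ : EuclideanSpace ℂ (Fin r)) ∂(sphereUniform r)

/-- Multiplication of the `k`-th coordinate by the imaginary unit. -/
def phase {r : ℕ} (k : Fin r) : EuclideanSpace ℂ (Fin r) →ₗ[ℂ] EuclideanSpace ℂ (Fin r) where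
  toFun x := WithLp.toLp 2 fun i => (if i = k then Complex.I else 1) * x i
  map_add' x y := by ext i; simp [mul_add]
  map_smul' c x := by ext i; simp [mul_left_comm]

lemma norm_phase {r : ℕ} (k : Fin r) (x : EuclideanSpace ℂ (Fin r)) : ‖phase k x‖ = ‖x‖ := by
  rw [EuclideanSpace.norm_eq, EuclideanSpace.norm_eq]
  congr 1
  refine Finset.sum_congr rfl fun i _ => ?_
  by_cases h : i = k <;> simp [phase, h]

lemma moment_phase {r : ℕ} (k p q s t : Fin r) :
    (if p = k then -Complex.I else 1) * (if q = k then Complex.I else 1) *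
      ((if s = k then -Complex.I else 1) * (if t = k then Complex.I else 1)) * moment p q s t
      = moment p q s t := by
  conv_rhs => rw [moment, ← integral_sphereUniform_comp (phase k) (norm_phase k) _
    (continuous_mono p q s t)]
  rw [moment, ← integral_const_mul]
  congr 1
  ext ξ
  have h : ∀ i : Fin r, (starRingEnd ℂ) (if i = k then Complex.I else 1)
      = if i = k then -Complex.I else 1 := fun i => by split_ifs <;> simp
  simp only [mono, phase, LinearMap.coe_mk, AddHom.coe_mk, map_mul, h]
  ring

/-- A moment vanishes unless every index occurs equally often with and without conjugation:
otherwise some `phase k` multiplies it by `-1` or `±I`. -/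
lemma moment_eq_zero {r : ℕ} {p q s t : Fin r} (h1 : ¬(p = q ∧ s = t)) (h2 : ¬(p = t ∧ q = s)) :
    moment p q s t = 0 := by
  have key : ∀ c z : ℂ, c ≠ 1 → c * z = z → z = 0 := fun c z hc hz => by
    have : (c - 1) * z = 0 := by rw [sub_mul, hz]; ring
    exact (mul_eq_zero.1 this).resolve_left (sub_ne_zero.2 hc)
  have hI : Complex.I ≠ 1 := fun h => by simpa using congrArg Complex.re h
  have hI' : -Complex.I ≠ 1 := fun h => by simpa using congrArg Complex.re h
  have hm : (-1 : ℂ) ≠ 1 := by norm_num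
  by_cases hpq : p = q
  · subst hpq
    have hst : s ≠ t := fun h => h1 ⟨rfl, h⟩
    refine key _ _ ?_ (moment_phase s p p s t)
    by_cases hps : p = s <;> simp [hps, hst.symm, hI']
  · by_cases hpt : p = t
    · subst hpt
      have hqs : q ≠ s := fun h => h2 ⟨rfl, h⟩
      refine key _ _ ?_ (moment_phase q p q s p)
      simp [hpq, hqs.symm, hI]
    · refine key _ _ ?_ (moment_phase p p q s t)
      by_cases hsp : s = p <;> simp [Ne.symm hpq, Ne.symm hpt, hsp, hI', hm]

/-- The rotation by the angle `arctan (4/3)` in the plane of the coordinates `p` and `q`. -/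
def rot {r : ℕ} (p q : Fin r) : EuclideanSpace ℂ (Fin r) →ₗ[ℂ] EuclideanSpace ℂ (Fin r) where
  toFun x := WithLp.toLp 2 fun i => if i = p then (3 / 5) * x p + (-4 / 5) * x q else
    if i = q then (4 / 5) * x p + (3 / 5) * x q else x i
  map_add' x y := by ext i; simp only [PiLp.add_apply]; split_ifs <;> ring
  map_smul' c x := by
    ext i
    simp only [PiLp.smul_apply, smul_eq_mul, RingHom.id_apply]
    split_ifs <;> ring

lemma norm_rot {r : ℕ} {p q : Fin r} (hpq : p ≠ q) (x : EuclideanSpace ℂ (Fin r)) :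
    ‖rot p q x‖ = ‖x‖ := by
  rw [EuclideanSpace.norm_eq, EuclideanSpace.norm_eq]
  congr 1
  rw [← sub_eq_zero, ← Finset.sum_sub_distrib, Fintype.sum_eq_add p q hpq]
  · simp only [rot, LinearMap.coe_mk, AddHom.coe_mk, if_true, if_neg hpq.symm, Complex.sq_norm,
      Complex.normSq_apply]
    simp
    ring
  · rintro i ⟨hp, hq⟩
    simp [rot, hp, hq]

/-- Fourth absolute moment of a real combination of two coordinates; the mixed monomials that are
not balanced integrate to zero. -/
lemma integral_combination {r : ℕ} (hr : 1 ≤ r) {p q : Fin r} (hpq : p ≠ q) (a b : ℝ) :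
    ∫ ξ : sphere (0 : EuclideanSpace ℂ (Fin r)) 1,
      ((starRingEnd ℂ) (a * ξ.1 p + b * ξ.1 q) * (a * ξ.1 p + b * ξ.1 q) *
      ((starRingEnd ℂ) (a * ξ.1 p + b * ξ.1 q) * (a * ξ.1 p + b * ξ.1 q))) ∂(sphereUniform r)
      = a ^ 4 * moment p p p p + b ^ 4 * moment q q q q
        + 4 * a ^ 2 * b ^ 2 * moment p p q q := by
  let w : Fin 2 → Fin r := ![p, q]
  let c : Fin 2 → ℂ := ![a, b]
  have hexp : ∀ ξ : sphere (0 : EuclideanSpace ℂ (Fin r)) 1,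
      ((starRingEnd ℂ) (a * ξ.1 p + b * ξ.1 q) * (a * ξ.1 p + b * ξ.1 q) *
      ((starRingEnd ℂ) (a * ξ.1 p + b * ξ.1 q) * (a * ξ.1 p + b * ξ.1 q)))
      = ∑ i, ∑ j, ∑ k, ∑ l, c i * c j * c k * c l * mono (w i) (w j) (w k) (w l) ξ.1 := by
    intro ξ
    simp only [Fin.sum_univ_two, w, c, mono, Matrix.cons_val_zero, Matrix.cons_val_one,
      map_add, map_mul, Complex.conj_ofReal]
    ring
  have hint : ∀ i j k l, Integrable (fun ξ : sphere (0 : EuclideanSpace ℂ (Fin r)) 1 =>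
      c i * c j * c k * c l * mono (w i) (w j) (w k) (w l) ξ.1) (sphereUniform r) :=
    fun i j k l => (integrable_of_continuous hr (continuous_mono _ _ _ _)).const_mul _
  simp_rw [hexp]
  rw [integral_finsetSum _ fun i _ => integrable_finsetSum _ fun j _ =>
    integrable_finsetSum _ fun k _ => integrable_finsetSum _ fun l _ => hint i j k l]
  simp_rw [integral_finsetSum _ fun j _ => integrable_finsetSum _ fun k _ =>
    integrable_finsetSum _ fun l _ => hint _ j k l]
  simp_rw [integral_finsetSum _ fun k _ => integrable_finsetSum _ fun l _ => hint _ _ k l]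
  simp_rw [integral_finsetSum _ fun l _ => hint _ _ _ l, integral_const_mul]
  change ∑ i, ∑ j, ∑ k, ∑ l, c i * c j * c k * c l * moment (w i) (w j) (w k) (w l) = _
  have e1 : moment p q q p = moment p p q q := by
    unfold moment mono; congr 1; ext; ring
  have e2 : moment q p p q = moment p p q q := by
    unfold moment mono; congr 1; ext; ring
  have e3 : moment q q p p = moment p p q q := by
    unfold moment mono; congr 1; ext; ring
  have hqp := hpq.symm
  have z : ∀ i j k l : Fin r, ¬(i = j ∧ k = l) → ¬(i = l ∧ j = k) → moment i j k l = 0 :=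
    fun _ _ _ _ => moment_eq_zero
  simp only [Fin.sum_univ_two, w, c, Matrix.cons_val_zero, Matrix.cons_val_one]
  rw [e1, e2, e3, z p p p q, z p p q p, z p q p p, z q p p p, z q q q p, z q q p q, z q p q q,
    z p q q q, z p q p q, z q p q p] <;> simp [hpq, hqp]
  ring

/-- Comparing the fourth moments of two coordinates before and after the rotation `rot p q`. -/
lemma moment_diag {r : ℕ} (hr : 1 ≤ r) {p q : Fin r} (hpq : p ≠ q) :
    moment p p p p = 2 * moment p p q q ∧ moment q q q q = 2 * moment p p q q := by
  have h1 := integral_sphereUniform_comp (rot p q) (norm_rot hpq) _ (continuous_mono p p p p)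
  have h2 := integral_sphereUniform_comp (rot p q) (norm_rot hpq) _ (continuous_mono q q q q)
  have c1 := integral_combination hr hpq (3 / 5) (-4 / 5)
  have c2 := integral_combination hr hpq (4 / 5) (3 / 5)
  push_cast at c1 c2
  simp only [mono, rot, LinearMap.coe_mk, AddHom.coe_mk, if_true, if_neg hpq.symm] at h1 h2
  rw [c1] at h1
  rw [c2] at h2
  change _ = moment p p p p at h1
  change _ = moment q q q q at h2
  -- With `a, a', b` for the three moments, the relations read `-544 a + 256 a' + 576 b = 0` and
  -- `256 a - 544 a' + 576 b = 0`; solving this system gives the coefficients below.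
  constructor
  · linear_combination (-425 / 288 : ℂ) * h1 - 25 / 36 * h2
  · linear_combination (-425 / 288 : ℂ) * h2 - 25 / 36 * h1

/-- Integrating `‖ξ‖⁴ = 1` coordinatewise. -/
lemma sum_moment {r : ℕ} (hr : 1 ≤ r) : ∑ p : Fin r, ∑ q : Fin r, moment p p q q = 1 := by
  have := isProbabilityMeasure_sphereUniform r hr
  have hint : ∀ p q : Fin r, Integrable (fun ξ : sphere (0 : EuclideanSpace ℂ (Fin r)) 1 =>
      mono p p q q ξ.1) (sphereUniform r) :=
    fun p q => integrable_of_continuous hr (continuous_mono _ _ _ _)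
  unfold moment
  simp_rw [← integral_finsetSum _ fun q _ => hint _ q]
  rw [← integral_finsetSum _ fun p _ => integrable_finsetSum _ fun q _ => hint p q]
  have hone : ∀ ξ : sphere (0 : EuclideanSpace ℂ (Fin r)) 1,
      ∑ p, ∑ q, mono p p q q ξ.1 = 1 := by
    intro ξ
    have hn : ∑ p, (starRingEnd ℂ) (ξ.1 p) * ξ.1 p = 1 := by
      have h := EuclideanSpace.norm_sq_eq ξ.1
      rw [norm_eq_of_mem_sphere ξ, one_pow] at h
      simp_rw [Complex.conj_mul']
      exact_mod_cast h.symm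
    simp only [mono]
    rw [← Finset.sum_mul_sum, hn, one_mul]
  simp [hone]

lemma moment_ppqq {r : ℕ} (hr : 1 ≤ r) (p q : Fin r) :
    moment p p q q = (1 + if p = q then 1 else 0) / ((r : ℂ) * ((r : ℂ) + 1)) := by
  have hr0 : (r : ℂ) ≠ 0 := by exact_mod_cast (by omega : r ≠ 0)
  have hr1 : (r : ℂ) + 1 ≠ 0 := by exact_mod_cast (by omega : r + 1 ≠ 0)
  have hd : ∀ i j : Fin r, moment i i i i = moment j j j j := fun i j => by
    by_cases h : i = j
    · rw [h]
    · rw [(moment_diag hr h).1, (moment_diag hr h).2]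
  obtain ⟨a, hall⟩ : ∃ a : ℂ, ∀ i j : Fin r,
      moment i i j j = (1 + if i = j then 1 else 0) * a := by
    refine ⟨moment p p p p / 2, fun i j => ?_⟩
    by_cases h : i = j
    · subst h; rw [hd i p]; simp; ring
    · rw [← hd i p, (moment_diag hr h).1]; simp [h]
  have hs := sum_moment hr
  simp_rw [hall] at hs
  simp_rw [← Finset.sum_mul, Finset.sum_add_distrib] at hs
  simp at hs
  rw [hall, eq_div_iff (mul_ne_zero hr0 hr1)]
  linear_combination (1 + if p = q then 1 else 0) * hs

lemma moment_eq {r : ℕ} (hr : 1 ≤ r) (p q s t : Fin r) :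
    moment p q s t = ((if p = q then 1 else 0) * (if s = t then 1 else 0)
      + (if p = t then 1 else 0) * (if q = s then 1 else 0)) / ((r : ℂ) * ((r : ℂ) + 1)) := by
  by_cases h1 : p = q ∧ s = t
  · obtain ⟨rfl, rfl⟩ := h1
    rw [moment_ppqq hr]
    by_cases h : p = s <;> simp [h]
  · by_cases h2 : p = t ∧ q = s
    · obtain ⟨rfl, rfl⟩ := h2
      have e : moment p q q p = moment p p q q := by
        unfold moment mono; congr 1; ext; ring
      rw [e, moment_ppqq hr]
      by_cases h : p = q
      · simp [h]
      · simp [h]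
    · rw [moment_eq_zero h1 h2]
      have a1 : ((if p = q then 1 else 0) * (if s = t then 1 else 0) : ℂ) = 0 := by
        simp; tauto
      have a2 : ((if p = t then 1 else 0) * (if q = s then 1 else 0) : ℂ) = 0 := by
        simp; tauto
      rw [a1, a2]; simp

/-- for `r ≥ 1` and `U, V ∈ M_r(ℂ)`,
`∫_{S^{2r−1}} (ξ*Uξ)(ξ*Vξ) dμ(ξ) = (tr U · tr V + tr(UV)) / (r(r+1))`. -/
theorem stmt7 (r : ℕ) (hr : 1 ≤ r) (U V : Matrix (Fin r) (Fin r) ℂ) :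
    ∫ ξ, quadForm U (fun p => (ξ : EuclideanSpace ℂ (Fin r)) p) *
        quadForm V (fun p => (ξ : EuclideanSpace ℂ (Fin r)) p) ∂(sphereUniform r)
      = (Matrix.trace U * Matrix.trace V + Matrix.trace (U * V)) /
          ((r : ℂ) * ((r : ℂ) + 1)) := by
  have hexp : ∀ ξ : sphere (0 : EuclideanSpace ℂ (Fin r)) 1,
      quadForm U (fun p => ξ.1 p) * quadForm V (fun p => ξ.1 p)
      = ∑ p, ∑ s, ∑ q, ∑ t, U p q * V s t * mono p q s t ξ.1 := by
    intro ξ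
    simp only [quadForm, mono, Finset.sum_mul_sum]
    refine Finset.sum_congr rfl fun p _ => Finset.sum_congr rfl fun s _ =>
      Finset.sum_congr rfl fun q _ => Finset.sum_congr rfl fun t _ => ?_
    ring
  have hint : ∀ p s q t, Integrable (fun ξ : sphere (0 : EuclideanSpace ℂ (Fin r)) 1 =>
      U p q * V s t * mono p q s t ξ.1) (sphereUniform r) :=
    fun p s q t => (integrable_of_continuous hr (continuous_mono _ _ _ _)).const_mul _
  simp_rw [hexp]
  rw [integral_finsetSum _ fun p _ => integrable_finsetSum _ fun s _ =>
    integrable_finsetSum _ fun q _ => integrable_finsetSum _ fun t _ => hint p s q t]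
  simp_rw [integral_finsetSum _ fun s _ => integrable_finsetSum _ fun q _ =>
    integrable_finsetSum _ fun t _ => hint _ s q t]
  simp_rw [integral_finsetSum _ fun q _ => integrable_finsetSum _ fun t _ => hint _ _ q t]
  simp_rw [integral_finsetSum _ fun t _ => hint _ _ _ t, integral_const_mul]
  change ∑ p, ∑ s, ∑ q, ∑ t, U p q * V s t * moment p q s t = _
  simp_rw [moment_eq hr, ← mul_div_assoc, ← Finset.sum_div]
  congr 1
  simp_rw [mul_add, Finset.sum_add_distrib]
  congr 1
  · simp [Matrix.trace, Finset.sum_mul_sum]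
  · simp [Matrix.trace, Matrix.mul_apply]
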